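/- Let (e_n) be a basis of an infinite-dimensional separable Banach space X which is C_a-almost greedy (‖x − P_A(x)‖ ≤ C_a·σ̃_m(x) for all x, m, A ∈ G(x,m)), C_q-quasi-greedy (‖P_A(x)‖ ≤ C_q‖x‖ for all x, m, A ∈ G(x,m)), and Δ-disjoint super-democratic (‖1_{εA}‖ ≤ Δ‖1_{δB}‖ for all finite A, B with |A| ≤ |B|, A ∩ B = ∅, and all sign sequences ε, δ). Let x ∈ X, m ≥ 1, A ∈ G(x,m) with P_A(x) ≠ x, B a nonempty finite set with |B| ≤ m and B ∩ A = ∅, t a scalar, and ε a sign sequence. Then ‖t·1_{εB}‖ ≤ 2Δ·C_a·C_q·‖x − t·1_{εB}‖. -/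

import Mathlib

/-!
Put `y = x - t • 1_{εB}` and `s = ‖t‖ / 2 > 0`. Since `f_n y → 0`, the set
`G = {n : ‖f_n y‖ ≥ s}` is finite. It contains `A` or `B`: if some `a ∈ A` has
`‖f_a y‖ = ‖f_a x‖ < s`, then `‖f_b x‖ < s` for all `b ∈ B`, whence
`‖f_b y‖ ≥ ‖t‖ - s = s`. In both cases `|B| ≤ |G|`.

Truncating `y` itself on `G` would compare `1_{εB}` with a set that may meet `B`. Instead the mass of
`G` is transported to a set `D` with `|D| = |G|`, disjoint from `G` and `B`, and so far out that
`P_D y` is negligible. For `z = y - P_D y + s • 1_D`, the set `G` is greedy, so almost greediness gives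
`‖z - P_G z‖ ≤ Ca ‖z - P_D z‖ = Ca ‖y - P_D y‖`. As `D` is greedy for `z - P_G z`, quasi-greediness
gives `s ‖1_D‖ ≤ Cq Ca ‖y - P_D y‖` (`truncation_bound`). Disjoint super-democracy bounds
`‖1_{εB}‖` by `Δ ‖1_D‖`, and letting `P_D y → 0` finishes the proof.
-/

open Finset

noncomputable section

variable {𝕜 : Type*} [RCLike 𝕜] {X : Type*} [NormedAddCommGroup X] [NormedSpace 𝕜 X]

/-- The coordinate projection `P_A x = ∑_{n ∈ A} e_n^*(x) • e_n`. -/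
def gproj (e : ℕ → X) (f : ℕ → X →L[𝕜] 𝕜) (A : Finset ℕ) (x : X) : X :=
  ∑ n ∈ A, f n x • e n

/-- `A` is a greedy set of `x` of order `m` (with respect to the functionals `f`):
`|A| = m` and `min_{n ∈ A} |e_n^*(x)| ≥ sup_{n ∉ A} |e_n^*(x)|`. -/
def IsGreedySet (f : ℕ → X →L[𝕜] 𝕜) (x : X) (m : ℕ) (A : Finset ℕ) : Prop :=
  A.card = m ∧ ∀ a ∈ A, ∀ b ∉ A, ‖f b x‖ ≤ ‖f a x‖

/-- A semi-normalized basis of `X` together with its biorthogonal functionals: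
the linear span of `(e_n)` is dense, `f_j (e_k) = δ_{jk}`, and both sequences are
semi-normalized. -/
structure SNBasis (e : ℕ → X) (f : ℕ → X →L[𝕜] 𝕜) : Prop where
  dense_span : Dense (Submodule.span 𝕜 (Set.range e) : Set X)
  biorth : ∀ j k, f j (e k) = if j = k then 1 else 0
  semi_normalized : ∃ c₁ c₂ : ℝ, 0 < c₁ ∧
    ∀ n, c₁ ≤ ‖e n‖ ∧ c₁ ≤ ‖f n‖ ∧ ‖e n‖ ≤ c₂ ∧ ‖f n‖ ≤ c₂

/-- `σ̃_m(x) = inf {‖x - P_A x‖ : A ⊆ ℕ finite, |A| = m}`. -/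
def sigmaTilde (e : ℕ → X) (f : ℕ → X →L[𝕜] 𝕜) (m : ℕ) (x : X) : ℝ :=
  sInf {r | ∃ A : Finset ℕ, A.card = m ∧ r = ‖x - gproj e f A x‖}

/-- `σ̌_m(x) = inf {‖x - P_I x‖ : I an interval of consecutive integers, |I| = m}`. -/
def sigmaCheck (e : ℕ → X) (f : ℕ → X →L[𝕜] 𝕜) (m : ℕ) (x : X) : ℝ :=
  sInf {r | ∃ a : ℕ, r = ‖x - gproj e f (Finset.Ico a (a + m)) x‖}

/-- The coefficients of a vector with respect to a semi-normalized basis tend to zero. -/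
lemma SNBasis.finite_large {e : ℕ → X} {f : ℕ → X →L[𝕜] 𝕜} (hb : SNBasis e f)
    (y : X) {η : ℝ} (hη : 0 < η) : {n | η ≤ ‖f n y‖}.Finite := by
  obtain ⟨c₁, c₂, hc₁, hc⟩ := hb.semi_normalized
  have hc₂ : 0 < c₂ := hc₁.trans_le ((hc 0).1.trans (hc 0).2.2.1)
  obtain ⟨p, hp, hyp⟩ := hb.dense_span.exists_dist_lt y (div_pos hη hc₂)
  have hfin : {n | f n p ≠ 0}.Finite := by
    clear hyp
    induction hp using Submodule.span_induction with
    | mem v hv =>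
      obtain ⟨k, rfl⟩ := hv
      refine (Set.finite_singleton k).subset fun n hn => ?_
      by_contra h
      exact hn (by rw [hb.biorth, if_neg (by simpa using h)])
    | zero => simp
    | add u v _ _ hu hv =>
      refine (hu.union hv).subset fun n hn => ?_
      by_contra h
      simp only [Set.mem_union, Set.mem_ofPred_eq, not_or, not_not] at h
      exact hn (by rw [map_add, h.1, h.2, add_zero])
    | smul c v _ hv =>
      refine hv.subset fun n hn h => hn ?_
      rw [map_smul, h, smul_zero]
  refine hfin.subset fun n hn h => ?_
  have h1 : ‖f n y‖ < η := by
    calc ‖f n y‖ = ‖f n (y - p)‖ := by rw [map_sub, h, sub_zero]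
      _ ≤ ‖f n‖ * ‖y - p‖ := (f n).le_opNorm _
      _ ≤ c₂ * ‖y - p‖ := by gcongr; exact (hc n).2.2.2
      _ < c₂ * (η / c₂) := by rw [← dist_eq_norm]; gcongr
      _ = η := by field_simp
  exact absurd hn (not_le.mpr h1)

lemma SNBasis.coord_sum {e : ℕ → X} {f : ℕ → X →L[𝕜] 𝕜} (hb : SNBasis e f)
    (D : Finset ℕ) (a : ℕ → 𝕜) (n : ℕ) :
    f n (∑ k ∈ D, a k • e k) = if n ∈ D then a n else 0 := by
  simp [map_sum, hb.biorth]

lemma sigmaTilde_le (e : ℕ → X) (f : ℕ → X →L[𝕜] 𝕜) (x : X) (A : Finset ℕ) :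
    sigmaTilde e f A.card x ≤ ‖x - gproj e f A x‖ :=
  csInf_le ⟨0, by rintro _ ⟨B, -, rfl⟩; exact norm_nonneg _⟩ ⟨A, rfl, rfl⟩

/-- Mass transport: if `G` is the set of coefficients of `y` of size at least `s`, then
`s • 1_D` is controlled by `y - P_D y` for every `D` disjoint from `G` with `|D| = |G|`. -/
lemma truncation_bound {e : ℕ → X} {f : ℕ → X →L[𝕜] 𝕜} (hb : SNBasis e f)
    {Ca Cq : ℝ} (hCa : 0 ≤ Ca) (hCq : 0 ≤ Cq)
    (hag : ∀ (x : X) (m : ℕ) (A : Finset ℕ), IsGreedySet f x m A →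
      ‖x - gproj e f A x‖ ≤ Ca * sigmaTilde e f m x)
    (hqg : ∀ (x : X) (m : ℕ) (A : Finset ℕ), IsGreedySet f x m A →
      ‖gproj e f A x‖ ≤ Cq * ‖x‖)
    {y : X} {s : ℝ} (hs : 0 ≤ s) {G D : Finset ℕ} (hG : ∀ n, n ∈ G ↔ s ≤ ‖f n y‖)
    (hDG : Disjoint D G) (hcard : D.card = G.card) :
    s * ‖∑ n ∈ D, e n‖ ≤ Cq * (Ca * ‖y - gproj e f D y‖) := by
  have hdis : ∀ n ∈ D, n ∉ G := fun _ h => Finset.disjoint_left.mp hDG h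
  set z : X := y - gproj e f D y + ∑ n ∈ D, (s : 𝕜) • e n with hz
  have hfz : ∀ n, f n z = if n ∈ D then (s : 𝕜) else f n y := by
    intro n
    rw [hz, map_add, map_sub, gproj, hb.coord_sum, hb.coord_sum D (fun _ => (s : 𝕜))]
    split_ifs <;> simp
  set w : X := z - gproj e f G z with hw
  have hfw : ∀ n, f n w = if n ∈ D then (s : 𝕜) else if n ∈ G then 0 else f n y := by
    intro n
    rw [hw, map_sub, gproj, hb.coord_sum, hfz]
    by_cases h1 : n ∈ D
    · simp [h1, hdis n h1]
    · by_cases h2 : n ∈ G <;> simp [h1, h2]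
  have hns : ‖(s : 𝕜)‖ = s := RCLike.norm_of_nonneg hs
  have hGz : IsGreedySet f z D.card G := by
    refine ⟨hcard.symm, fun a ha b hb' => ?_⟩
    have haD : a ∉ D := fun h => hdis a h ha
    rw [hfz, hfz, if_neg haD]
    refine le_trans ?_ ((hG a).mp ha)
    split_ifs
    · exact hns.le
    · exact (not_le.mp fun h => hb' ((hG b).mpr h)).le
  have hDw : IsGreedySet f w D.card D := by
    refine ⟨rfl, fun a ha b hb' => ?_⟩
    rw [hfw, hfw, if_pos ha, if_neg hb', hns]
    split_ifs with h
    · simpa using hs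
    · exact (not_le.mp fun h' => h ((hG b).mpr h')).le
  have hPw : gproj e f D w = (s : 𝕜) • ∑ n ∈ D, e n := by
    rw [gproj, Finset.smul_sum]
    exact Finset.sum_congr rfl fun n hn => by rw [hfw, if_pos hn]
  have hPz : z - gproj e f D z = y - gproj e f D y := by
    have : gproj e f D z = ∑ n ∈ D, (s : 𝕜) • e n := by
      rw [gproj]
      exact Finset.sum_congr rfl fun n hn => by rw [hfz, if_pos hn]
    rw [this, hz, add_sub_cancel_right]
  calc s * ‖∑ n ∈ D, e n‖ = ‖gproj e f D w‖ := by rw [hPw, norm_smul, hns]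
    _ ≤ Cq * ‖w‖ := hqg w _ D hDw
    _ ≤ Cq * (Ca * sigmaTilde e f D.card z) := by gcongr; exact hag z _ G hGz
    _ ≤ Cq * (Ca * ‖z - gproj e f D z‖) := by gcongr; exact sigmaTilde_le e f z D
    _ = _ := by rw [hPz]

/-- Away from any finite set there are sets of any cardinality on which the projection of `y`
is arbitrarily small. -/
lemma SNBasis.exists_small_gproj {e : ℕ → X} {f : ℕ → X →L[𝕜] 𝕜} (hb : SNBasis e f)
    (y : X) (F : Finset ℕ) (k : ℕ) {η : ℝ} (hη : 0 < η) :
    ∃ D : Finset ℕ, D.card = k ∧ Disjoint D F ∧ ‖gproj e f D y‖ ≤ η := by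
  obtain ⟨c₁, c₂, hc₁, hc⟩ := hb.semi_normalized
  have hc₂ : 0 < c₂ := hc₁.trans_le ((hc 0).1.trans (hc 0).2.2.1)
  have hθ : 0 < η / ((k + 1) * c₂) := by positivity
  have hfin := (hb.finite_large y hθ).union F.finite_toSet
  obtain ⟨D, hD, hDk⟩ := hfin.infinite_compl.exists_subset_card_eq k
  refine ⟨D, hDk, Finset.disjoint_left.mpr fun n hn hF => hD hn (Or.inr hF), ?_⟩
  calc ‖gproj e f D y‖ ≤ ∑ n ∈ D, ‖f n y • e n‖ := norm_sum_le _ _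
    _ ≤ ∑ _n ∈ D, η / ((k + 1) * c₂) * c₂ := by
        refine Finset.sum_le_sum fun n hn => ?_
        rw [norm_smul]
        have h1 : ‖f n y‖ < η / ((k + 1) * c₂) := not_le.mp fun h => hD hn (Or.inl h)
        exact mul_le_mul h1.le (hc n).2.2.1 (norm_nonneg _) hθ.le
    _ = k * η / (k + 1) := by
        rw [Finset.sum_const, hDk, nsmul_eq_mul]; field_simp
    _ ≤ η := by
        rw [div_le_iff₀ (by positivity)]; nlinarith

/-- quantitative bound for `‖t ⬝ 1_{εB}‖` in terms of `‖x - t ⬝ 1_{εB}‖` for an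
almost greedy, quasi-greedy, disjoint super-democratic basis. -/
theorem stmt15 [CompleteSpace X] [TopologicalSpace.SeparableSpace X]
    (hinf : ¬FiniteDimensional 𝕜 X)
    (e : ℕ → X) (f : ℕ → X →L[𝕜] 𝕜) (hb : SNBasis e f)
    (Ca Cq Δ : ℝ)
    (hag : ∀ (x : X) (m : ℕ) (A : Finset ℕ), IsGreedySet f x m A →
      ‖x - gproj e f A x‖ ≤ Ca * sigmaTilde e f m x)
    (hqg : ∀ (x : X) (m : ℕ) (A : Finset ℕ), IsGreedySet f x m A →
      ‖gproj e f A x‖ ≤ Cq * ‖x‖)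
    (hsd : ∀ (A B : Finset ℕ) (ε δ : ℕ → 𝕜), A.card ≤ B.card → Disjoint A B →
      (∀ n, ‖ε n‖ = 1) → (∀ n, ‖δ n‖ = 1) →
      ‖∑ n ∈ A, ε n • e n‖ ≤ Δ * ‖∑ n ∈ B, δ n • e n‖)
    (x : X) (m : ℕ) (hm : 1 ≤ m) (A : Finset ℕ) (hA : IsGreedySet f x m A)
    (hPA : gproj e f A x ≠ x)
    (B : Finset ℕ) (hBne : B.Nonempty) (hBcard : B.card ≤ m) (hBA : Disjoint B A)
    (t : 𝕜) (ε : ℕ → 𝕜) (hε : ∀ n, ‖ε n‖ = 1) :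
    ‖t • ∑ n ∈ B, ε n • e n‖ ≤ 2 * Δ * Ca * Cq * ‖x - t • ∑ n ∈ B, ε n • e n‖ := by
  obtain ⟨c₁, c₂, hc₁, hc⟩ := hb.semi_normalized
  have hpos : ∀ n, 0 < ‖e n‖ := fun n => hc₁.trans_le (hc n).1
  -- The three constants are nonnegative, as tests on `e 0` and `e 1` show.
  have hCa : 0 ≤ Ca := by
    have h := (hag (e 0) 0 ∅ ⟨rfl, by simp⟩)
    have hσ := sigmaTilde_le e f (e 0) ∅
    have hσ0 : 0 ≤ sigmaTilde e f 0 (e 0) :=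
      Real.sInf_nonneg (by rintro _ ⟨B, -, rfl⟩; exact norm_nonneg _)
    simp only [gproj, Finset.sum_empty, sub_zero, Finset.card_empty] at h hσ
    by_contra hneg
    nlinarith [hpos 0]
  have hCq : 0 ≤ Cq := by
    have h := hqg (e 0) 1 {0} ⟨rfl, by
      intro a ha b hb'
      simp only [Finset.mem_singleton] at ha hb'
      subst ha
      simp [hb.biorth, hb']⟩
    exact nonneg_of_mul_nonneg_left ((norm_nonneg _).trans h) (hpos 0)
  have hΔ : 0 ≤ Δ := by
    have h := hsd {0} {1} 1 1 (by simp) (by simp) (by simp) (by simp)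
    simp only [Finset.sum_singleton, Pi.one_apply, one_smul] at h
    exact nonneg_of_mul_nonneg_left ((norm_nonneg _).trans h) (hpos 1)
  rcases eq_or_ne t 0 with rfl | ht
  · rw [zero_smul, norm_zero]; positivity
  set y : X := x - t • ∑ n ∈ B, ε n • e n with hy
  have hs : 0 < ‖t‖ / 2 := by have := norm_pos_iff.mpr ht; positivity
  have hfy : ∀ n, f n y = f n x - if n ∈ B then t * ε n else 0 := by
    intro n
    rw [hy, map_sub, map_smul, hb.coord_sum]
    split_ifs <;> simp
  set G : Finset ℕ := (hb.finite_large y hs).toFinset with hGdef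
  have hG : ∀ n, n ∈ G ↔ ‖t‖ / 2 ≤ ‖f n y‖ := by simp [hGdef]
  have hBG : B.card ≤ G.card := by
    by_cases hAG : A ⊆ G
    · exact hBcard.trans (hA.1 ▸ Finset.card_le_card hAG)
    · obtain ⟨a, ha, haG⟩ := Finset.not_subset.mp hAG
      have haB : a ∉ B := Finset.disjoint_right.mp hBA ha
      have h1 : ‖f a x‖ < ‖t‖ / 2 := by
        have := not_le.mp fun h => haG ((hG a).mpr h)
        rwa [hfy, if_neg haB, sub_zero] at this
      refine Finset.card_le_card fun b hbB => (hG b).mpr ?_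
      have h2 := hA.2 a ha b (Finset.disjoint_left.mp hBA hbB)
      have h3 := norm_sub_norm_le (t * ε b) (f b x)
      rw [hfy, if_pos hbB, norm_sub_rev]
      rw [norm_mul, hε, mul_one] at h3
      linarith
  refine le_of_forall_pos_le_add fun η hη => ?_
  -- `M` is the Lipschitz constant with which an error in `‖y‖` enters the final bound.
  set M : ℝ := 2 * Δ * Ca * Cq with hM
  have hM0 : 0 ≤ M := by positivity
  obtain ⟨D, hDk, hDF, hDy⟩ :=
    hb.exists_small_gproj y (G ∪ B) G.card (div_pos hη (by positivity : 0 < M + 1))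
  rw [Finset.disjoint_union_right] at hDF
  have h1 := truncation_bound hb hCa hCq hag hqg hs.le hG hDF.1 hDk
  have h2 := hsd B D ε 1 (hDk ▸ hBG) hDF.2.symm hε (by simp)
  simp only [Pi.one_apply, one_smul] at h2
  calc ‖t • ∑ n ∈ B, ε n • e n‖ = ‖t‖ * ‖∑ n ∈ B, ε n • e n‖ := norm_smul _ _
    _ ≤ ‖t‖ * (Δ * ‖∑ n ∈ D, e n‖) := by gcongr
    _ = 2 * Δ * (‖t‖ / 2 * ‖∑ n ∈ D, e n‖) := by ring
    _ ≤ 2 * Δ * (Cq * (Ca * ‖y - gproj e f D y‖)) := by gcongr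
    _ = M * ‖y - gproj e f D y‖ := by rw [hM]; ring
    _ ≤ M * (‖y‖ + η / (M + 1)) := by
        gcongr
        exact (norm_sub_le _ _).trans (by gcongr)
    _ ≤ M * ‖y‖ + η := by
        rw [mul_add]
        gcongr
        rw [mul_div_assoc', div_le_iff₀ (by positivity)]
        nlinarith
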